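/- arXiv:2405.12064 — 2 statements merged into one kernel-verified Lean document; each statement's English description precedes it below -/
import Mathlib

section
/- Let 𝕎 = ⋃_{i=0}^{J−1} [f_i − W_i, f_i + W_i] ⊆ [−1/2, 1/2] be a union of J ≥ 1 pairwise disjoint closed intervals with half-widths W_i ∈ (0, 1/2), and fix ε ∈ (0, 1). Then there exist constants Ĉ₁ > 0, Ĉ₂ > 0 and an integer N̂₁ ≥ 1 (depending only on 𝕎 and ε) such that for every N ≥ N̂₁ and every index l with 0 ≤ l ≤ J − 1 + Σ_{i=0}^{J−1} ⌊2NW_i(1−ε)⌋ and l ≤ N−1, the l-th eigenvalue satisfies 1 − λ_{N,𝕎}^{(l)} ≤ Ĉ₁·N²·e^{−Ĉ₂·N}. -/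
open MeasureTheory Matrix Real Set

/-- The 1-D prolate matrix `B_{N,𝕎}` with entries `∫_𝕎 exp(2πi f (m−n)) df`. -/
noncomputable def prolate1D (N : ℕ) (𝕎 : Set ℝ) : Matrix (Fin N) (Fin N) ℂ :=
  fun m n => ∫ f in 𝕎,
    Complex.exp (2 * (Real.pi : ℂ) * Complex.I * (f : ℂ) * (((m : ℕ) : ℂ) - ((n : ℕ) : ℂ)))

/-!
By Courant–Fischer it is enough to exhibit a space of more than `l` dimensions of sequences `x`
whose transform `dtft N t x` has little energy outside `𝕎`. Take `d ≈ N ε ∑ Wᵢ` and the uniform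
grid of `N + d` frequencies, and let `x` range over the sequences whose transform vanishes at
every node that is not well inside a band; there are few such nodes, so this space is large. For
`s ∉ 𝕎`, multiply the transform by `((1 + e^{2πi(s - t)}) / 2) ^ d`, which equals `1` at `t = s`
and has modulus `|cos (π (s - t))| ^ d`. The product is the transform of a sequence of length
`N + d`, hence obeys the discrete Parseval identity on the grid; as it is exponentially small at
every node, it is so at `s` too.
-/

open scoped FourierTransform

section MinMax

variable {𝕜 n : Type*} [RCLike 𝕜] [Fintype n] [DecidableEq n] {A : Matrix n n 𝕜}

lemma sum_norm_sq_star_unitary_mulVec (U : unitaryGroup n 𝕜) (x : n → 𝕜) :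
    ∑ i, ‖(star (U : Matrix n n 𝕜) *ᵥ x) i‖ ^ 2 = ∑ i, ‖x i‖ ^ 2 := by
  have h (y : n → 𝕜) : ((∑ i, ‖y i‖ ^ 2 : ℝ) : 𝕜) = star y ⬝ᵥ y := by
    simp [dotProduct, RCLike.conj_mul]
  apply RCLike.ofReal_injective (K := 𝕜)
  rw [h, h, star_mulVec, star_eq_conjTranspose, conjTranspose_conjTranspose, ← dotProduct_mulVec,
    mulVec_mulVec, ← star_eq_conjTranspose, Unitary.mul_star_self_of_mem U.2, one_mulVec]

lemma star_dotProduct_mulVec_eq_sum_eigenvalues (hA : A.IsHermitian) (x : n → 𝕜) :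
    star x ⬝ᵥ (A *ᵥ x) = ((∑ i, hA.eigenvalues i *
      ‖(star (hA.eigenvectorUnitary : Matrix n n 𝕜) *ᵥ x) i‖ ^ 2 : ℝ) : 𝕜) := by
  set U : Matrix n n 𝕜 := (hA.eigenvectorUnitary : Matrix n n 𝕜)
  have diagonalize :
      A *ᵥ x = U *ᵥ (diagonal (RCLike.ofReal ∘ hA.eigenvalues) *ᵥ (star U *ᵥ x)) := by
    conv_lhs => rw [hA.spectral_theorem, Unitary.conjStarAlgAut_apply]
    simp only [mulVec_mulVec, U, mul_assoc]
  have star_eq : star x ᵥ* U = star (star U *ᵥ x) := by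
    rw [star_mulVec, star_eq_conjTranspose, conjTranspose_conjTranspose]
  rw [diagonalize, dotProduct_mulVec, star_eq]
  simp [dotProduct, mulVec_diagonal, ← RCLike.conj_mul, mul_left_comm]

/-- One half of the Courant–Fischer principle. -/
theorem le_of_card_eigenvalues_gt_lt_finrank (hA : A.IsHermitian) (V : Submodule 𝕜 (n → 𝕜))
    {c r : ℝ} (hV : Fintype.card {i // r < hA.eigenvalues i} < Module.finrank 𝕜 V)
    (hc : ∀ x ∈ V, c * ∑ i, ‖x i‖ ^ 2 ≤ RCLike.re (star x ⬝ᵥ (A *ᵥ x))) : c ≤ r := by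
  let U := hA.eigenvectorUnitary
  let coords : V →ₗ[𝕜] ({i // r < hA.eigenvalues i} → 𝕜) :=
    LinearMap.funLeft 𝕜 𝕜 Subtype.val ∘ₗ (star (U : Matrix n n 𝕜)).mulVecLin ∘ₗ V.subtype
  obtain ⟨⟨x, hxV⟩, hx, hx0⟩ := (Submodule.ne_bot_iff _).1 <|
    LinearMap.ker_ne_bot_of_finrank_lt (f := coords) (by simpa using hV)
  have coords_eq_zero (i : n) (hi : r < hA.eigenvalues i) : (star (U : Matrix n n 𝕜) *ᵥ x) i = 0 :=
    congrFun (LinearMap.mem_ker.1 hx) ⟨i, hi⟩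
  have quad_le : RCLike.re (star x ⬝ᵥ (A *ᵥ x)) ≤ r * ∑ i, ‖x i‖ ^ 2 := by
    rw [star_dotProduct_mulVec_eq_sum_eigenvalues hA, RCLike.ofReal_re,
      ← sum_norm_sq_star_unitary_mulVec U, Finset.mul_sum]
    refine Finset.sum_le_sum fun i _ => ?_
    rcases lt_or_ge r (hA.eigenvalues i) with hi | hi
    · simp [U, coords_eq_zero i hi]
    · gcongr
  have norm_pos : 0 < ∑ i, ‖x i‖ ^ 2 := by
    obtain ⟨i, hi⟩ := Function.ne_iff.1 (show x ≠ 0 by simpa using hx0)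
    exact Finset.sum_pos' (fun _ _ => by positivity)
      ⟨i, Finset.mem_univ i, pow_pos (norm_pos_iff.2 hi) 2⟩
  exact le_of_mul_le_mul_right ((hc x hxV).trans quad_le) norm_pos

lemma card_eigenvalues_gt_le {N : ℕ} {eig μ : Fin N → ℝ} (hμ : Antitone μ)
    {σ : Equiv.Perm (Fin N)} (hσ : eig = μ ∘ σ) (l : Fin N) :
    Fintype.card {i // μ l < eig i} ≤ l := by
  let toFinLt (i : {i // μ l < eig i}) : Fin l :=
    ⟨σ i, Fin.lt_def.1 <| hμ.reflect_lt <| by simpa [hσ] using i.2⟩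
  have toFinLt_injective : Function.Injective toFinLt := fun i j h =>
    Subtype.ext <| σ.injective <| Fin.ext <| Fin.mk.inj_iff.1 h
  simpa using Fintype.card_le_of_injective toFinLt toFinLt_injective

end MinMax

section Dtft

variable {N : ℕ}

/-- The discrete-time Fourier transform `x ↦ ∑ₙ xₙ e^{-2πint}` of a finite sequence, at frequency
`t`. -/
noncomputable def dtft (N : ℕ) (t : ℝ) : (Fin N → ℂ) →ₗ[ℂ] ℂ :=
  Fintype.linearCombination ℂ fun n : Fin N => (𝐞 (-t) : ℂ) ^ (n : ℕ)

lemma dtft_apply (t : ℝ) (x : Fin N → ℂ) : dtft N t x = ∑ n, x n * (𝐞 (-t) : ℂ) ^ (n : ℕ) := rfl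

lemma continuous_dtft (x : Fin N → ℂ) : Continuous fun t => dtft N t x := by
  simp only [dtft_apply, Real.fourierChar_apply]
  fun_prop

lemma star_fourierChar_pow_mul_pow (t : ℝ) (m n : ℕ) :
    star ((𝐞 (-t) : ℂ) ^ m) * (𝐞 (-t) : ℂ) ^ n =
      Complex.exp (2 * (π : ℂ) * Complex.I * (t : ℂ) * ((m : ℂ) - (n : ℂ))) := by
  rw [Real.fourierChar_apply, Complex.star_def, ← Complex.exp_nat_mul, ← Complex.exp_nat_mul,
    ← Complex.exp_conj, ← Complex.exp_add]
  congr 1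
  simp only [map_mul, map_natCast, Complex.conj_ofReal, Complex.conj_I]
  push_cast
  ring

lemma ofReal_norm_sq_dtft (t : ℝ) (x : Fin N → ℂ) :
    ((‖dtft N t x‖ ^ 2 : ℝ) : ℂ) = ∑ m : Fin N, ∑ n : Fin N, star (x m) *
      (Complex.exp (2 * (π : ℂ) * Complex.I * (t : ℂ) * (((m : ℕ) : ℂ) - ((n : ℕ) : ℂ))) *
        x n) := by
  rw [Complex.ofReal_pow, ← Complex.conj_mul', ← Complex.star_def, dtft_apply, star_sum,
    Finset.sum_mul_sum]
  refine Finset.sum_congr rfl fun m _ => Finset.sum_congr rfl fun n _ => ?_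
  rw [← star_fourierChar_pow_mul_pow, star_mul']
  ring

lemma norm_sq_dtft_le (t : ℝ) (x : Fin N → ℂ) : ‖dtft N t x‖ ^ 2 ≤ N * ∑ n, ‖x n‖ ^ 2 := by
  calc ‖dtft N t x‖ ^ 2 ≤ (∑ n, ‖x n‖) ^ 2 := by
        gcongr
        simpa [dtft_apply, Circle.norm_coe] using
          norm_sum_le Finset.univ fun n => x n * (𝐞 (-t) : ℂ) ^ (n : ℕ)
    _ ≤ N * ∑ n, ‖x n‖ ^ 2 := by
        simpa using sq_sum_le_card_mul_sum_sq (s := Finset.univ) (f := fun n => ‖x n‖)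

lemma star_dotProduct_prolate1D_mulVec {E : Set ℝ} (hE : volume E ≠ ⊤) (x : Fin N → ℂ) :
    star x ⬝ᵥ (prolate1D N E *ᵥ x) = ((∫ t in E, ‖dtft N t x‖ ^ 2 : ℝ) : ℂ) := by
  have integrable (m n : Fin N) : IntegrableOn (fun t : ℝ => star (x m) *
      (Complex.exp (2 * (π : ℂ) * Complex.I * (t : ℂ) * (((m : ℕ) : ℂ) - ((n : ℕ) : ℂ))) *
        x n)) E := by
    refine Measure.integrableOn_of_bounded (M := ‖x m‖ * ‖x n‖) hE ?_ (ae_of_all _ fun t => ?_)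
    · exact Continuous.aestronglyMeasurable (by fun_prop)
    · simp [← star_fourierChar_pow_mul_pow, Circle.norm_coe]
  simp_rw [← integral_complex_ofReal, ofReal_norm_sq_dtft]
  rw [integral_finsetSum _ fun m _ => integrable_finsetSum _ fun n _ => integrable m n]
  simp only [dotProduct, mulVec, Finset.mul_sum]
  refine Finset.sum_congr rfl fun m _ => ?_
  rw [integral_finsetSum _ fun n _ => integrable m n]
  refine Finset.sum_congr rfl fun n _ => ?_
  rw [integral_const_mul, integral_mul_const]
  rfl

lemma prolate1D_Icc_eq_one (N : ℕ) : prolate1D N (Icc (-(1 / 2) : ℝ) (1 / 2)) = 1 := by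
  ext m n
  rw [prolate1D, integral_Icc_eq_integral_Ioc, ← intervalIntegral.integral_of_le (by norm_num)]
  rcases eq_or_ne m n with rfl | hmn
  · norm_num
  · have hmn' : ((m : ℕ) : ℂ) - ((n : ℕ) : ℂ) ≠ 0 :=
      sub_ne_zero.2 fun h => hmn (Fin.ext (by exact_mod_cast h))
    have hc : 2 * (π : ℂ) * Complex.I * (((m : ℕ) : ℂ) - ((n : ℕ) : ℂ)) ≠ 0 := by
      simp [hmn', Real.pi_ne_zero]
    rw [Matrix.one_apply_ne hmn]
    have phase (t : ℝ) : 2 * (π : ℂ) * Complex.I * t * (((m : ℕ) : ℂ) - ((n : ℕ) : ℂ)) =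
        2 * (π : ℂ) * Complex.I * (((m : ℕ) : ℂ) - ((n : ℕ) : ℂ)) * t := by ring
    simp_rw [phase]
    rw [integral_exp_mul_complex hc, div_eq_zero_iff, sub_eq_zero,
      Complex.exp_eq_exp_iff_exists_int]
    refine Or.inl ⟨(m : ℤ) - (n : ℤ), ?_⟩
    push_cast
    ring

theorem integral_norm_sq_dtft (x : Fin N → ℂ) :
    ∫ t in Icc (-(1 / 2) : ℝ) (1 / 2), ‖dtft N t x‖ ^ 2 = ∑ n, ‖x n‖ ^ 2 := by
  have h := star_dotProduct_prolate1D_mulVec (E := Icc (-(1 / 2) : ℝ) (1 / 2))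
    isCompact_Icc.measure_ne_top x
  rw [prolate1D_Icc_eq_one, one_mulVec] at h
  apply Complex.ofReal_injective
  rw [← h]
  simp [dotProduct, Complex.conj_mul']

lemma sum_sub_le_integral_norm_sq_dtft {E : Set ℝ} (hE : E ⊆ Icc (-(1 / 2)) (1 / 2))
    (hEm : MeasurableSet E) {x : Fin N → ℂ} {B : ℝ} (hB : 0 ≤ B)
    (hx : ∀ s ∈ Icc (-(1 / 2)) (1 / 2) \ E, ‖dtft N s x‖ ^ 2 ≤ B) :
    ∑ n, ‖x n‖ ^ 2 - B ≤ ∫ t in E, ‖dtft N t x‖ ^ 2 := by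
  set I : Set ℝ := Icc (-(1 / 2)) (1 / 2)
  have hI : volume I = 1 := by norm_num [I, Real.volume_Icc]
  have integrable : IntegrableOn (fun t => ‖dtft N t x‖ ^ 2) I :=
    ((continuous_dtft x).norm.pow 2).continuousOn.integrableOn_compact isCompact_Icc
  have volume_le : volume (I \ E) ≤ 1 := (measure_mono sdiff_subset).trans hI.le
  have outside : ∫ t in I \ E, ‖dtft N t x‖ ^ 2 ≤ B := by
    calc ∫ t in I \ E, ‖dtft N t x‖ ^ 2 ≤ ‖∫ t in I \ E, ‖dtft N t x‖ ^ 2‖ := le_abs_self _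
      _ ≤ B * volume.real (I \ E) :=
          norm_setIntegral_le_of_norm_le_const (volume_le.trans_lt ENNReal.one_lt_top)
            fun s hs => by simpa only [norm_pow, norm_norm] using hx s hs
      _ ≤ B := mul_le_of_le_one_right hB (ENNReal.toReal_mono ENNReal.one_ne_top volume_le)
  rw [setIntegral_sdiff hEm integrable hE, integral_norm_sq_dtft] at outside
  linarith

end Dtft

section Grid

variable {N M : ℕ}

/-- The `k`-th node of the uniform grid with spacing `1 / M` on `[-1/2, 1/2)`, for `k < M`. -/
noncomputable def gridNode (M k : ℕ) : ℝ := k / M - 1 / 2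

lemma sum_exp_gridNode {m n : ℕ} (hm : m < M) (hn : n < M) :
    ∑ k : Fin M, Complex.exp (2 * (π : ℂ) * Complex.I * (gridNode M k : ℂ) *
      ((m : ℂ) - (n : ℂ))) = if m = n then (M : ℂ) else 0 := by
  have hM : (M : ℂ) ≠ 0 := by exact_mod_cast (Nat.zero_lt_of_lt hm).ne'
  split_ifs with hmn
  · simp [hmn]
  set ω := Complex.exp (2 * (π : ℂ) * Complex.I / M) with hω
  have prim : IsPrimitiveRoot ω M := Complex.isPrimitiveRoot_exp M (by exact_mod_cast hM)
  set ζ := ω ^ m / ω ^ n with hζ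
  have zeta_ne_one : ζ ≠ 1 := by
    rw [hζ, Ne, div_eq_one_iff_eq (pow_ne_zero _ (Complex.exp_ne_zero _))]
    exact fun h => hmn (prim.pow_inj hm hn h)
  have zeta_pow : ζ ^ M = 1 := by
    rw [hζ, div_pow, pow_right_comm, pow_right_comm ω n, prim.pow_eq_one, one_pow, one_pow, div_one]
  have term (k : Fin M) : Complex.exp (2 * (π : ℂ) * Complex.I * (gridNode M k : ℂ) *
      ((m : ℂ) - (n : ℂ))) = Complex.exp (-(π * Complex.I * ((m : ℂ) - n))) * ζ ^ (k : ℕ) := by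
    rw [hζ, hω, ← Complex.exp_nat_mul, ← Complex.exp_nat_mul, ← Complex.exp_sub,
      ← Complex.exp_nat_mul, ← Complex.exp_add, gridNode]
    congr 1
    push_cast
    field_simp
    ring
  simp_rw [term, ← Finset.mul_sum]
  rw [Fin.sum_univ_eq_sum_range (fun k => ζ ^ k), geom_sum_eq zeta_ne_one, zeta_pow, sub_self,
    zero_div, mul_zero]

theorem sum_norm_sq_dtft_gridNode (hNM : N ≤ M) (x : Fin N → ℂ) :
    ∑ k : Fin M, ‖dtft N (gridNode M k) x‖ ^ 2 = M * ∑ n, ‖x n‖ ^ 2 := by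
  apply Complex.ofReal_injective
  rw [Complex.ofReal_sum]
  simp_rw [ofReal_norm_sq_dtft]
  rw [Finset.sum_comm, Complex.ofReal_mul, Complex.ofReal_sum, Finset.mul_sum]
  refine Finset.sum_congr rfl fun m _ => ?_
  rw [Finset.sum_comm]
  simp_rw [← Finset.mul_sum, ← Finset.sum_mul,
    sum_exp_gridNode (m.2.trans_le hNM) ((Fin.is_lt _).trans_le hNM), Fin.val_inj]
  simp [← Complex.conj_mul']
  ring

lemma norm_one_add_fourierChar_div_two (u : ℝ) : ‖(1 + (𝐞 u : ℂ)) / 2‖ = |cos (π * u)| := by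
  have factor :
      (1 + (𝐞 u : ℂ)) / 2 = Complex.exp ((π * u : ℝ) * Complex.I) * (cos (π * u) : ℝ) := by
    rw [Real.fourierChar_apply, Complex.ofReal_cos, Complex.cos, mul_div_assoc', mul_add,
      ← Complex.exp_add, ← Complex.exp_add, add_comm (1 : ℂ), ← Complex.exp_zero]
    push_cast
    ring_nf
  rw [factor, norm_mul, Complex.norm_exp_ofReal_mul_I, one_mul, Complex.norm_real, norm_eq_abs]

lemma exists_norm_dtft_eq_mul_abs_cos_pow (s : ℝ) (d : ℕ) (x : Fin N → ℂ) :
    ∃ y : Fin (N + d) → ℂ, ∀ t, ‖dtft (N + d) t y‖ = ‖dtft N t x‖ * |cos (π * (s - t))| ^ d := by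
  induction d with
  | zero => exact ⟨x, by simp⟩
  | succ d ih =>
    obtain ⟨y, hy⟩ := ih
    let y' : Fin (N + d + 1) → ℂ := Fin.snoc y 0 + (𝐞 s : ℂ) • Fin.cons 0 y
    refine ⟨(1 / 2 : ℂ) • y', fun t => ?_⟩
    have dtft_snoc : dtft (N + d + 1) t (Fin.snoc y 0) = dtft (N + d) t y := by
      simp [dtft_apply, Fin.sum_univ_castSucc]
    have dtft_cons : dtft (N + d + 1) t (Fin.cons 0 y) = 𝐞 (-t) * dtft (N + d) t y := by
      simp [dtft_apply, Fin.sum_univ_succ, Finset.mul_sum, pow_succ, mul_left_comm, mul_comm]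
    have char_mul : (𝐞 (s - t) : ℂ) = 𝐞 s * 𝐞 (-t) := by
      rw [sub_eq_add_neg, AddChar.map_add_eq_mul, Circle.coe_mul]
    have dtft_y' : dtft (N + d + 1) t ((1 / 2 : ℂ) • y') =
        dtft (N + d) t y * ((1 + (𝐞 (s - t) : ℂ)) / 2) := by
      rw [map_smul, map_add, map_smul, dtft_snoc, dtft_cons, char_mul, smul_eq_mul, smul_eq_mul]
      ring
    change ‖dtft (N + d + 1) t _‖ = _
    rw [dtft_y', norm_mul, hy, norm_one_add_fourierChar_div_two, mul_assoc, ← pow_succ]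

theorem norm_sq_dtft_le_of_gridNode {d : ℕ} {x : Fin N → ℂ} {s ρ : ℝ}
    (hx : ∀ k : Fin (N + d), dtft N (gridNode (N + d) k) x = 0 ∨
      |cos (π * (s - gridNode (N + d) k))| ≤ ρ) :
    ‖dtft N s x‖ ^ 2 ≤ (N + d) * ρ ^ (2 * d) * ∑ n, ‖x n‖ ^ 2 := by
  obtain ⟨y, hy⟩ := exists_norm_dtft_eq_mul_abs_cos_pow s d x
  have at_node (k : Fin (N + d)) : ‖dtft (N + d) (gridNode (N + d) k) y‖ ^ 2 ≤
      ρ ^ (2 * d) * ‖dtft N (gridNode (N + d) k) x‖ ^ 2 := by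
    rw [hy, mul_pow, ← pow_mul, mul_comm d, mul_comm]
    rcases hx k with h | h
    · simp [h]
    · gcongr
  calc ‖dtft N s x‖ ^ 2 = ‖dtft (N + d) s y‖ ^ 2 := by simp [hy]
    _ ≤ (N + d : ℕ) * ∑ n, ‖y n‖ ^ 2 := norm_sq_dtft_le s y
    _ = ∑ k : Fin (N + d), ‖dtft (N + d) (gridNode (N + d) k) y‖ ^ 2 :=
        (sum_norm_sq_dtft_gridNode le_rfl y).symm
    _ ≤ ∑ k : Fin (N + d), ρ ^ (2 * d) * ‖dtft N (gridNode (N + d) k) x‖ ^ 2 :=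
        Finset.sum_le_sum fun k _ => at_node k
    _ = (N + d) * ρ ^ (2 * d) * ∑ n, ‖x n‖ ^ 2 := by
        rw [← Finset.mul_sum, sum_norm_sq_dtft_gridNode (Nat.le_add_right N d), Nat.cast_add]
        ring

end Grid

section Eigenvalue

variable {N d : ℕ} {E : Set ℝ}

theorem one_sub_eigenvalue_le_of_gridNode (hE : E ⊆ Icc (-(1 / 2)) (1 / 2))
    (hEm : MeasurableSet E) (hA : (prolate1D N E).IsHermitian) {μ : Fin N → ℝ} (hμ : Antitone μ)
    {σ : Equiv.Perm (Fin N)} (hσ : hA.eigenvalues = μ ∘ σ) {l : Fin N} {ρ : ℝ}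
    {T : Finset (Fin (N + d))} (hT : T.card + l < N)
    (hρ : ∀ k ∉ T, ∀ s ∈ Icc (-(1 / 2)) (1 / 2) \ E, |cos (π * (s - gridNode (N + d) k))| ≤ ρ) :
    1 - μ l ≤ (N + d) * ρ ^ (2 * d) := by
  let samples : (Fin N → ℂ) →ₗ[ℂ] T → ℂ := LinearMap.pi fun k => dtft N (gridNode (N + d) k)
  have finrank_ker : (l : ℕ) < Module.finrank ℂ (LinearMap.ker samples) := by
    have rank_nullity := samples.finrank_range_add_finrank_ker
    have range_le := (LinearMap.range samples).finrank_le
    simp only [Module.finrank_fintype_fun_eq_card, Fintype.card_coe, Fintype.card_fin]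
      at rank_nullity range_le
    omega
  suffices 1 - (N + d) * ρ ^ (2 * d) ≤ μ l by linarith
  refine le_of_card_eigenvalues_gt_lt_finrank hA (LinearMap.ker samples)
    ((card_eigenvalues_gt_le hμ hσ l).trans_lt finrank_ker) fun x hx => ?_
  have leakage (s : ℝ) (hs : s ∈ Icc (-(1 / 2)) (1 / 2) \ E) :
      ‖dtft N s x‖ ^ 2 ≤ (N + d) * ρ ^ (2 * d) * ∑ n, ‖x n‖ ^ 2 := by
    refine norm_sq_dtft_le_of_gridNode fun k => ?_
    by_cases hk : k ∈ T
    · exact Or.inl (congrFun (LinearMap.mem_ker.1 hx) ⟨k, hk⟩)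
    · exact Or.inr (hρ k hk s hs)
  have nonneg : 0 ≤ (N + d) * ρ ^ (2 * d) * ∑ n, ‖x n‖ ^ 2 :=
    mul_nonneg (mul_nonneg (by positivity) ((even_two_mul d).pow_nonneg ρ)) (by positivity)
  rw [star_dotProduct_prolate1D_mulVec (measure_ne_top_of_subset hE isCompact_Icc.measure_ne_top),
    sub_mul, one_mul]
  exact sum_sub_le_integral_norm_sq_dtft hE hEm nonneg leakage

end Eigenvalue

section Bands

variable {ι : Type*} [Fintype ι] {f W : ι → ℝ} {η : ℝ} {M : ℕ}

/-- The indices of the grid nodes that lie in `[a, b]`. -/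
noncomputable def gridNodesIcc (M : ℕ) (a b : ℝ) : Finset (Fin M) := {k | gridNode M k ∈ Icc a b}

/-- The indices of the grid nodes lying outside every band `[fᵢ - Wᵢ, fᵢ + Wᵢ]` shrunk by `η` at
both ends. -/
noncomputable def outerNodes (f W : ι → ℝ) (η : ℝ) (M : ℕ) : Finset (Fin M) :=
  (Finset.univ.biUnion fun i => gridNodesIcc M (f i - W i + η) (f i + W i - η))ᶜ

lemma mem_gridNodesIcc {a b : ℝ} {k : Fin M} :
    k ∈ gridNodesIcc M a b ↔ gridNode M k ∈ Icc a b := by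
  simp [gridNodesIcc]

lemma le_card_gridNodesIcc (hM : 0 < M) {a b : ℝ} (ha : -(1 / 2) ≤ a) (hb : b ≤ 1 / 2) :
    M * (b - a) - 1 ≤ ((gridNodesIcc M a b).card : ℝ) := by
  have hM' : (0 : ℝ) < M := by exact_mod_cast hM
  set lo : ℕ := ⌈(M : ℝ) * (a + 1 / 2)⌉₊
  set hi : ℕ := ⌈(M : ℝ) * (b + 1 / 2)⌉₊
  have subset : Finset.Ico lo hi ⊆ (gridNodesIcc M a b).map Fin.valEmbedding := by
    intro k hk
    have hk_lo := Nat.ceil_le.1 (Finset.mem_Ico.1 hk).1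
    have hk_hi := Nat.lt_ceil.1 (Finset.mem_Ico.1 hk).2
    have hkM : (k : ℝ) < M := by nlinarith
    refine Finset.mem_map.2 ⟨⟨k, by exact_mod_cast hkM⟩, mem_gridNodesIcc.2 ⟨?_, ?_⟩, rfl⟩
    · rw [gridNode, le_sub_iff_add_le, le_div_iff₀ hM']
      linarith
    · rw [gridNode, sub_le_iff_le_add, div_le_iff₀ hM']
      linarith
  have card_le := Finset.card_le_card subset
  rw [Finset.card_map, Nat.card_Ico, tsub_le_iff_right] at card_le
  have lo_lt : (lo : ℝ) < M * (a + 1 / 2) + 1 :=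
    Nat.ceil_lt_add_one (mul_nonneg hM'.le (by linarith))
  have le_hi : (M : ℝ) * (b + 1 / 2) ≤ hi := Nat.le_ceil _
  have card_le' : (hi : ℝ) ≤ (gridNodesIcc M a b).card + lo := by exact_mod_cast card_le
  linarith

lemma endpoints_of_Icc_subset {c w a b : ℝ} (hw : 0 ≤ w) (h : Icc (c - w) (c + w) ⊆ Icc a b) :
    a ≤ c - w ∧ c + w ≤ b :=
  (Icc_subset_Icc_iff (by linarith)).1 h

lemma card_outerNodes_le (hM : 0 < M) (hη : 0 ≤ η) (hW : ∀ i, 0 ≤ W i)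
    (hsub : ∀ i, Icc (f i - W i) (f i + W i) ⊆ Icc (-(1 / 2)) (1 / 2))
    (hdisj : Pairwise fun i j =>
      Disjoint (Icc (f i - W i) (f i + W i)) (Icc (f j - W j) (f j + W j))) :
    ((outerNodes f W η M).card : ℝ) ≤ M * (1 - 2 * ∑ i, (W i - η)) + Fintype.card ι := by
  set innerNodes := fun i => gridNodesIcc M (f i - W i + η) (f i + W i - η)
  have inner_disjoint : ((Finset.univ : Finset ι) : Set ι).PairwiseDisjoint innerNodes := by
    intro i _ j _ hij
    have shrink (i : ι) : Icc (f i - W i + η) (f i + W i - η) ⊆ Icc (f i - W i) (f i + W i) :=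
      Icc_subset_Icc (by linarith) (by linarith)
    exact Finset.disjoint_left.2 fun k hi hj => Set.disjoint_left.1 (hdisj hij)
      (shrink i (mem_gridNodesIcc.1 hi)) (shrink j (mem_gridNodesIcc.1 hj))
  have card_add : (outerNodes f W η M).card + ∑ i, (innerNodes i).card = M := by
    rw [← Finset.card_biUnion inner_disjoint, outerNodes, Finset.card_compl_add_card,
      Fintype.card_fin]
  have card_inner (i : ι) : M * (2 * (W i - η)) - 1 ≤ ((innerNodes i).card : ℝ) := by
    have ends := endpoints_of_Icc_subset (hW i) (hsub i)
    convert le_card_gridNodesIcc hM (a := f i - W i + η) (b := f i + W i - η) (by linarith)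
      (by linarith) using 3
    ring
  have sum_card_inner := Finset.sum_le_sum fun i (_ : i ∈ Finset.univ) => card_inner i
  rw [Finset.sum_sub_distrib, ← Finset.mul_sum, ← Finset.mul_sum, Finset.sum_const,
    nsmul_one, Finset.card_univ] at sum_card_inner
  have card_add' : ((outerNodes f W η M).card : ℝ) + ∑ i, ((innerNodes i).card : ℝ) = M := by
    exact_mod_cast card_add
  linarith

lemma abs_cos_pi_mul_le {u : ℝ} (hη : 0 ≤ η) (hu : η ≤ |u|) (hu' : |u| ≤ 1 - η) :
    |cos (π * u)| ≤ cos (π * η) := by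
  rw [← cos_abs, abs_mul, abs_of_pos pi_pos, abs_le']
  refine ⟨cos_le_cos_of_nonneg_of_le_pi (by positivity) ?_ (by gcongr), ?_⟩
  · exact mul_le_of_le_one_right pi_pos.le (by linarith)
  · rw [← cos_pi_sub]
    refine cos_le_cos_of_nonneg_of_le_pi (by positivity) ?_ ?_ <;> nlinarith [pi_pos]

lemma abs_cos_le_of_notMem_outerNodes (hη : 0 ≤ η) (hW : ∀ i, 0 ≤ W i)
    (hsub : ∀ i, Icc (f i - W i) (f i + W i) ⊆ Icc (-(1 / 2)) (1 / 2)) {k : Fin M}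
    (hk : k ∉ outerNodes f W η M) {s : ℝ}
    (hs : s ∈ Icc (-(1 / 2)) (1 / 2) \ ⋃ i, Icc (f i - W i) (f i + W i)) :
    |cos (π * (s - gridNode M k))| ≤ cos (π * η) := by
  obtain ⟨i, hi⟩ : ∃ i, gridNode M k ∈ Icc (f i - W i + η) (f i + W i - η) := by
    simpa [outerNodes, mem_gridNodesIcc] using hk
  have ends := endpoints_of_Icc_subset (hW i) (hsub i)
  have hsi : s ∉ Icc (f i - W i) (f i + W i) := fun h => hs.2 (mem_iUnion.2 ⟨i, h⟩)
  refine abs_cos_pi_mul_le hη ?_ ?_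
  · by_contra! h
    rw [abs_lt] at h
    exact hsi ⟨by linarith [hi.1], by linarith [hi.2]⟩
  · exact abs_le.2 ⟨by linarith [hs.1.1, hi.2], by linarith [hs.1.2, hi.1]⟩

theorem one_sub_eigenvalue_le_of_bands (hη : 0 ≤ η) (hW : ∀ i, 0 ≤ W i)
    (hsub : ∀ i, Icc (f i - W i) (f i + W i) ⊆ Icc (-(1 / 2)) (1 / 2))
    (hdisj : Pairwise fun i j =>
      Disjoint (Icc (f i - W i) (f i + W i)) (Icc (f j - W j) (f j + W j)))
    {N d : ℕ} (hA : (prolate1D N (⋃ i, Icc (f i - W i) (f i + W i))).IsHermitian)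
    {μ : Fin N → ℝ} (hμ : Antitone μ) {σ : Equiv.Perm (Fin N)} (hσ : hA.eigenvalues = μ ∘ σ)
    {l : Fin N}
    (hl : ((N + d : ℕ) : ℝ) * (1 - 2 * ∑ i, (W i - η)) + Fintype.card ι + l < N) :
    1 - μ l ≤ (N + d) * cos (π * η) ^ (2 * d) := by
  refine one_sub_eigenvalue_le_of_gridNode (iUnion_subset hsub)
    (MeasurableSet.iUnion fun _ => measurableSet_Icc) hA hμ hσ
    (T := outerNodes f W η (N + d)) ?_
    fun k hk s hs => abs_cos_le_of_notMem_outerNodes hη hW hsub hk hs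
  have card_le := card_outerNodes_le (Nat.add_pos_left l.pos d) hη hW hsub hdisj
  have : ((outerNodes f W η (N + d)).card : ℝ) + l < N := by linarith
  exact_mod_cast this

end Bands

section Rates

lemma pow_floor_le_inv_mul_exp {r x : ℝ} (hr : 0 < r) (hr1 : r ≤ 1) :
    r ^ ⌊x⌋₊ ≤ r⁻¹ * exp (log r * x) := by
  calc r ^ ⌊x⌋₊ = r ^ (⌊x⌋₊ : ℝ) := (rpow_natCast r _).symm
    _ ≤ r ^ (x - 1) := rpow_le_rpow_of_exponent_ge hr hr1 (Nat.sub_one_lt_floor x).le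
    _ = r⁻¹ * exp (log r * x) := by
        rw [rpow_sub_one hr.ne', rpow_def_of_pos hr, div_eq_inv_mul]

lemma add_floor_mul_pow_le {N : ℕ} {a r : ℝ} (ha : 0 ≤ a) (hr : 0 < r) (hr1 : r ≤ 1) :
    (N + ⌊N * a⌋₊) * r ^ ⌊N * a⌋₊ ≤ (1 + a) * r⁻¹ * (N : ℝ) ^ 2 * exp (log r * a * N) := by
  have le_sq : (N : ℝ) ≤ N ^ 2 := by exact_mod_cast Nat.le_self_pow two_ne_zero N
  calc (N + ⌊N * a⌋₊) * r ^ ⌊N * a⌋₊ ≤ (N + N * a) * (r⁻¹ * exp (log r * (N * a))) := by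
        gcongr
        · exact Nat.floor_le (by positivity)
        · exact pow_floor_le_inv_mul_exp hr hr1
    _ = (1 + a) * r⁻¹ * N * exp (log r * a * N) := by ring_nf
    _ ≤ (1 + a) * r⁻¹ * (N : ℝ) ^ 2 * exp (log r * a * N) := by gcongr

lemma cos_pi_mul_sq_mem_Ioo {η : ℝ} (hη : η ∈ Ioo 0 (1 / 2)) : cos (π * η) ^ 2 ∈ Ioo 0 1 := by
  have cos_pos : 0 < cos (π * η) := cos_pos_of_mem_Ioo <| by
    constructor <;> nlinarith [pi_pos, hη.1, hη.2]
  have sin_pos : 0 < sin (π * η) := sin_pos_of_mem_Ioo <| by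
    constructor <;> nlinarith [pi_pos, hη.1, hη.2]
  exact ⟨by positivity, by nlinarith [sin_sq_add_cos_sq (π * η)]⟩

/-- Up to boundary terms, the `d` extra nodes cost at most `N ε S` and the margins `N ε S / 2`,
while lowering the index by the factor `1 - ε` gains `2 N ε S`; the surplus absorbs the boundary
terms. -/
lemma outerNodes_bound_add_index_lt {ι : Type*} [Fintype ι] {W : ι → ℝ} {N l : ℕ} {η ε : ℝ}
    (hW : ∀ i, 0 ≤ W i) (hε : ε ∈ Ioo 0 1) (hη : ∀ i, η ≤ ε / 4 * W i)
    (hN : 4 * Fintype.card ι ≤ N * (ε * ∑ i, W i))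
    (hl : l < Fintype.card ι + ∑ i, ⌊2 * (N : ℝ) * W i * (1 - ε)⌋₊) :
    ((N + ⌊N * (ε * ∑ i, W i)⌋₊ : ℕ) : ℝ) * (1 - 2 * ∑ i, (W i - η)) + Fintype.card ι + l < N := by
  set S := ∑ i, W i with hS
  set d := ⌊N * (ε * S)⌋₊
  have S_nonneg : 0 ≤ S := Finset.sum_nonneg fun i _ => hW i
  have d_le : (d : ℝ) ≤ N * (ε * S) :=
    Nat.floor_le (mul_nonneg N.cast_nonneg (mul_nonneg hε.1.le S_nonneg))
  have margin_le : (1 - ε / 4) * S ≤ ∑ i, (W i - η) := by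
    rw [hS, Finset.mul_sum]
    exact Finset.sum_le_sum fun i _ => by linarith [hη i]
  have margin_nonneg : 0 ≤ ∑ i, (W i - η) :=
    (mul_nonneg (by linarith [hε.2]) S_nonneg).trans margin_le
  have floor_le : ∑ i, (⌊2 * (N : ℝ) * W i * (1 - ε)⌋₊ : ℝ) ≤ 2 * N * S * (1 - ε) := by
    rw [hS, Finset.mul_sum, Finset.sum_mul]
    refine Finset.sum_le_sum fun i _ => Nat.floor_le ?_
    exact mul_nonneg (mul_nonneg (by positivity) (hW i)) (by linarith [hε.2])
  have l_lt : (l : ℝ) + 1 ≤ Fintype.card ι + ∑ i, (⌊2 * (N : ℝ) * W i * (1 - ε)⌋₊ : ℝ) := by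
    exact_mod_cast hl
  push_cast
  nlinarith [mul_nonneg d.cast_nonneg margin_nonneg,
    mul_le_mul_of_nonneg_left margin_le N.cast_nonneg]

end Rates

theorem multiband_eigenvalue_cluster_near_one
    (J : ℕ) (hJ : 1 ≤ J) (f W : Fin J → ℝ)
    (hW : ∀ i, W i ∈ Set.Ioo (0 : ℝ) (1 / 2))
    (hsub : ∀ i, Set.Icc (f i - W i) (f i + W i) ⊆ Set.Icc (-(1 / 2) : ℝ) (1 / 2))
    (hdisj : ∀ i j, i ≠ j →
      Disjoint (Set.Icc (f i - W i) (f i + W i)) (Set.Icc (f j - W j) (f j + W j)))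
    (ε : ℝ) (hε : ε ∈ Set.Ioo (0 : ℝ) 1) :
    ∃ (Chat₁ Chat₂ : ℝ) (Nhat₁ : ℕ), 0 < Chat₁ ∧ 0 < Chat₂ ∧ 1 ≤ Nhat₁ ∧
      ∀ (N : ℕ), Nhat₁ ≤ N →
        ∀ (hA : (prolate1D N (⋃ i, Set.Icc (f i - W i) (f i + W i))).IsHermitian)
          (μ : Fin N → ℝ),
          Antitone μ →
          (∃ σ : Equiv.Perm (Fin N), hA.eigenvalues = μ ∘ σ) →
          ∀ l : Fin N, (l : ℕ) ≤ J - 1 + ∑ i, ⌊2 * (N : ℝ) * W i * (1 - ε)⌋₊ →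
            1 - μ l ≤ Chat₁ * (N : ℝ) ^ 2 * Real.exp (-Chat₂ * (N : ℝ)) := by
  have hW0 (i : Fin J) : 0 < W i := (hW i).1
  have : Nonempty (Fin J) := ⟨⟨0, hJ⟩⟩
  obtain ⟨i₀, hi₀⟩ := Finite.exists_min W
  set η := ε / 4 * W i₀
  have hη : η ∈ Ioo 0 (1 / 2) :=
    ⟨mul_pos (by linarith [hε.1]) (hW0 i₀),
      (mul_le_of_le_one_left (hW0 i₀).le (by linarith [hε.2])).trans_lt (hW i₀).2⟩
  set r := cos (π * η) ^ 2
  obtain ⟨r_pos, r_lt_one⟩ : r ∈ Ioo 0 1 := cos_pi_mul_sq_mem_Ioo hη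
  set a := ε * ∑ i, W i
  have a_pos : 0 < a := mul_pos hε.1 (Finset.sum_pos (fun i _ => hW0 i) Finset.univ_nonempty)
  refine ⟨(1 + a) * r⁻¹, -log r * a, max 1 ⌈4 * J / a⌉₊, by positivity,
    mul_pos (neg_pos.2 (log_neg r_pos r_lt_one)) a_pos, le_max_left _ _, ?_⟩
  rintro N hN hA μ hμ ⟨σ, hσ⟩ l hl
  have N_large : 4 * Fintype.card (Fin J) ≤ N * a := by
    rw [Fintype.card_fin, ← div_le_iff₀ a_pos]
    exact Nat.ceil_le.1 ((le_max_right _ _).trans hN)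
  have index_lt := outerNodes_bound_add_index_lt (fun i => (hW0 i).le) hε
    (fun i => mul_le_mul_of_nonneg_left (hi₀ i) (by linarith [hε.1])) N_large
    (show (l : ℕ) < _ by rw [Fintype.card_fin]; omega)
  calc 1 - μ l ≤ (N + ⌊N * a⌋₊) * r ^ ⌊N * a⌋₊ := by
        rw [← pow_mul]
        exact one_sub_eigenvalue_le_of_bands hη.1.le (fun i => (hW0 i).le) hsub
          (fun i j => hdisj i j) hA hμ hσ index_lt
    _ ≤ (1 + a) * r⁻¹ * (N : ℝ) ^ 2 * exp (-(-log r * a) * N) := by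
        simpa only [neg_mul, neg_neg] using add_floor_mul_pow_le a_pos.le r_pos r_lt_one.le
end

section
/- Let 𝕎 = ⋃_{i=0}^{J−1} [f_i − W_i, f_i + W_i] ⊆ [−1/2, 1/2] be a union of J ≥ 1 pairwise disjoint closed intervals with half-widths W_i ∈ (0, 1/2) and total measure ‖𝕎‖ = Σ_i 2W_i, and fix ε ∈ (0, 1/‖𝕎‖ − 1). Then there exist constants Ĉ₃ > 0, Ĉ₄ > 0 and an integer N̂₂ ≥ 1 (depending only on 𝕎 and ε) such that for every N ≥ N̂₂ and every index l with Σ_{i=0}^{J−1} ⌈2NW_i(1+ε)⌉ ≤ l ≤ N−1, the l-th eigenvalue satisfies λ_{N,𝕎}^{(l)} ≤ Ĉ₃·e^{−Ĉ₄·N}. -/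
/-!
By the min-max principle it suffices to find a subspace of codimension at most `l` on which the
quadratic form of the prolate matrix is exponentially small. That form is
`x ↦ ∫_𝕎 |P_x(exp(-2πit))|² dt`, where `P_x` is the polynomial with coefficients `x`. Sample the
circle at the points `exp(-2πij/(N + s))` with `s ≈ θ N`, and let `P_x` vanish at the samples with
`j/(N + s)` within `δ` of `𝕎`: these are about `Σ 2 (W_i + δ) (N + s)` conditions, hence at most `l`
when `θ` and `δ` are small. For `t` in `𝕎` and `z = exp(-2πit)`, the polynomial
`P_x ((1 + z⁻¹ X) / 2)^s` has degree less than `N + s` and the value `P_x(z)` at `z`, so it is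
controlled there by its values at the samples. It vanishes at the samples near `𝕎`, and the factor
`((1 + z⁻¹ X) / 2)^s` is at most `cos(πδ)^s` in modulus at the others.
-/

open MeasureTheory Matrix Real Set

open Module Polynomial
open scoped Finset FourierTransform

section Eigenvalues

variable {𝕜 E ι : Type*} [RCLike 𝕜] [NormedAddCommGroup E] [InnerProductSpace 𝕜 E] [Fintype ι]

theorem re_inner_self_apply_eq_sum (b : OrthonormalBasis ι 𝕜 E) {T : E →ₗ[𝕜] E} {a : ι → ℝ}
    (hT : ∀ i, T (b i) = (a i : 𝕜) • b i) (x : E) :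
    RCLike.re (inner 𝕜 x (T x)) = ∑ i, a i * ‖inner 𝕜 (b i) x‖ ^ 2 := by
  have hTx : T x = ∑ i, inner 𝕜 (b i) x • (a i : 𝕜) • b i := by
    conv_lhs => rw [← b.sum_repr' x]
    simp only [map_sum, map_smul, hT]
  rw [hTx, inner_sum, map_sum]
  refine Finset.sum_congr rfl fun i _ ↦ ?_
  rw [inner_smul_right, inner_smul_right, mul_left_comm, RCLike.re_ofReal_mul,
    inner_mul_symm_re_eq_norm, norm_mul, norm_inner_symm x, sq]

theorem finrank_le_card_eigenvalue_le (b : OrthonormalBasis ι 𝕜 E) {T : E →ₗ[𝕜] E} {a : ι → ℝ}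
    (hT : ∀ i, T (b i) = (a i : 𝕜) • b i) {c : ℝ} {V : Submodule 𝕜 E}
    (hV : ∀ x ∈ V, RCLike.re (inner 𝕜 x (T x)) ≤ c * ‖x‖ ^ 2) :
    finrank 𝕜 V ≤ #{i | a i ≤ c} := by
  let φ : V →ₗ[𝕜] ({i // a i ≤ c} → 𝕜) :=
    LinearMap.pi (fun i ↦ (innerₛₗ 𝕜 (b i))) ∘ₗ V.subtype
  have hφ : Function.Injective φ := by
    refine (injective_iff_map_eq_zero φ).2 fun x hx ↦ ?_
    have hlow (i : ι) (hi : a i ≤ c) : inner 𝕜 (b i) (x : E) = 0 := congrFun hx ⟨i, hi⟩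
    have hterm (i : ι) : 0 ≤ (a i - c) * ‖inner 𝕜 (b i) (x : E)‖ ^ 2 := by
      rcases le_or_gt (a i) c with hi | hi
      · simp [hlow i hi]
      · have := sub_pos.2 hi
        positivity
    have hsum : ∑ i, (a i - c) * ‖inner 𝕜 (b i) (x : E)‖ ^ 2 ≤ 0 := by
      have := hV x x.2
      rw [re_inner_self_apply_eq_sum b hT, ← b.sum_sq_norm_inner_right, Finset.mul_sum,
        ← sub_nonpos, ← Finset.sum_sub_distrib] at this
      simpa only [sub_mul] using this
    refine Subtype.ext (InnerProductSpace.ext_inner_left_basis b.toBasis fun i ↦ ?_)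
    rw [b.coe_toBasis, ZeroMemClass.coe_zero, inner_zero_right]
    rcases le_or_gt (a i) c with hi | hi
    · exact hlow i hi
    · have := (Finset.sum_eq_zero_iff_of_nonneg fun i _ ↦ hterm i).1
        (hsum.antisymm (Finset.sum_nonneg fun i _ ↦ hterm i)) i (Finset.mem_univ i)
      simpa [(sub_pos.2 hi).ne'] using this
  have := φ.finrank_le_finrank_of_injective hφ
  rwa [finrank_fintype_fun_eq_card, Fintype.card_subtype] at this

end Eigenvalues

theorem le_of_antitone_of_le_add_card {α : Type*} [LinearOrder α] {N : ℕ} {μ : Fin N → α}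
    (hμ : Antitone μ) {c : α} {l : Fin N} (h : N ≤ l + #{k | μ k ≤ c}) : μ l ≤ c := by
  by_contra! hl
  have hsub : ({k | μ k ≤ c} : Finset (Fin N)) ⊆ Finset.Ioi l := fun k hk ↦ by
    rw [Finset.mem_Ioi]
    by_contra! hkl
    exact (hl.trans_le (hμ hkl)).not_ge (by simpa using hk)
  have := Finset.card_le_card hsub
  rw [Fin.card_Ioi] at this
  omega

section Interpolation

theorem sum_pow_mul_inv_pow {K : Type*} [Field K] {ζ : K} {L : ℕ} (hζ : IsPrimitiveRoot ζ L)
    {m n : ℕ} (hm : m < L) (hn : n < L) :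
    ∑ j ∈ Finset.range L, (ζ ^ m * (ζ ^ n)⁻¹) ^ j = if m = n then (L : K) else 0 := by
  have hζ0 : ζ ≠ 0 := hζ.ne_zero (by omega)
  split_ifs with hmn
  · simp [hmn, hζ0]
  · have hne : ζ ^ m * (ζ ^ n)⁻¹ ≠ 1 := fun h ↦
      hmn (hζ.pow_inj hm hn (mul_inv_eq_one₀ (pow_ne_zero n hζ0) |>.1 h))
    rw [geom_sum_eq hne, mul_pow, inv_pow, pow_right_comm, pow_right_comm ζ n, hζ.pow_eq_one]
    simp

theorem sum_eval_pow_mul_inv_pow {K : Type*} [Field K] {ζ : K} {L : ℕ} (hζ : IsPrimitiveRoot ζ L)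
    {P : K[X]} (hP : P.natDegree < L) {n : ℕ} (hn : n < L) :
    ∑ j ∈ Finset.range L, P.eval (ζ ^ j) * ((ζ ^ n)⁻¹) ^ j = L * P.coeff n := by
  calc ∑ j ∈ Finset.range L, P.eval (ζ ^ j) * ((ζ ^ n)⁻¹) ^ j
      = ∑ m ∈ Finset.range L, P.coeff m * ∑ j ∈ Finset.range L, (ζ ^ m * (ζ ^ n)⁻¹) ^ j := by
        simp_rw [eval_eq_sum_range' hP, Finset.sum_mul, Finset.mul_sum]
        rw [Finset.sum_comm]
        simp only [mul_pow, pow_right_comm ζ _ _, mul_assoc]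
    _ = ∑ m ∈ Finset.range L, P.coeff m * if m = n then (L : K) else 0 :=
        Finset.sum_congr rfl fun m hm ↦ by
          rw [sum_pow_mul_inv_pow hζ (Finset.mem_range.1 hm) hn]
    _ = L * P.coeff n := by simp [hn, mul_comm]

variable {ζ : ℂ} {L : ℕ}

theorem norm_eval_le_sum_norm_eval_pow (hζ : IsPrimitiveRoot ζ L) {P : ℂ[X]}
    (hP : P.natDegree < L) {z : ℂ} (hz : ‖z‖ ≤ 1) :
    ‖P.eval z‖ ≤ ∑ j ∈ Finset.range L, ‖P.eval (ζ ^ j)‖ := by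
  have hL : (0 : ℝ) < L := by exact_mod_cast hP.pos
  have hcoeff : ∀ n ∈ Finset.range L,
      ‖P.coeff n * z ^ n‖ ≤ (∑ j ∈ Finset.range L, ‖P.eval (ζ ^ j)‖) / L := fun n hn ↦ by
    rw [le_div_iff₀ hL]
    calc ‖P.coeff n * z ^ n‖ * L = ‖z‖ ^ n * ‖L * P.coeff n‖ := by
          simp only [norm_mul, norm_pow, Complex.norm_natCast]; ring
      _ ≤ 1 * ‖L * P.coeff n‖ := by gcongr; exact pow_le_one₀ (norm_nonneg z) hz
      _ ≤ ∑ j ∈ Finset.range L, ‖P.eval (ζ ^ j) * ((ζ ^ n)⁻¹) ^ j‖ := by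
          rw [one_mul, ← sum_eval_pow_mul_inv_pow hζ hP (Finset.mem_range.1 hn)]
          exact norm_sum_le _ _
      _ = ∑ j ∈ Finset.range L, ‖P.eval (ζ ^ j)‖ := by
          simp [hζ.norm'_eq_one hP.pos.ne']
  calc ‖P.eval z‖ ≤ ∑ n ∈ Finset.range L, ‖P.coeff n * z ^ n‖ := by
        rw [eval_eq_sum_range' hP]
        exact norm_sum_le _ _
    _ ≤ ∑ _ ∈ Finset.range L, (∑ j ∈ Finset.range L, ‖P.eval (ζ ^ j)‖) / L :=
        Finset.sum_le_sum hcoeff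
    _ = ∑ j ∈ Finset.range L, ‖P.eval (ζ ^ j)‖ := by
        rw [Finset.sum_const, Finset.card_range, nsmul_eq_mul, mul_div_cancel₀ _ hL.ne']

theorem norm_eval_le_sum_norm_eval_pow_mul (hζ : IsPrimitiveRoot ζ L) {P : ℂ[X]} {s : ℕ}
    (hP : P.natDegree + s < L) {z : ℂ} (hz : ‖z‖ = 1) :
    ‖P.eval z‖ ≤ ∑ j ∈ Finset.range L, ‖P.eval (ζ ^ j)‖ * (‖z + ζ ^ j‖ / 2) ^ s := by
  have hz0 : z ≠ 0 := norm_pos_iff.1 (hz ▸ one_pos)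
  set F : ℂ[X] := C 2⁻¹ * (1 + C z⁻¹ * X) with hF
  have hFz : F.eval z = 1 := by
    simp [hF, hz0, one_add_one_eq_two]
  have hFnorm (y : ℂ) : ‖F.eval y‖ = ‖z + y‖ / 2 := by
    have : F.eval y = 2⁻¹ * (z⁻¹ * (z + y)) := by
      simp [hF, mul_add, hz0]
    rw [this, norm_mul, norm_mul, norm_inv, norm_inv, hz, Complex.norm_ofNat]
    ring
  have hdeg : (P * F ^ s).natDegree < L := by
    have hFd : F.natDegree ≤ 1 := by rw [hF]; compute_degree
    calc (P * F ^ s).natDegree ≤ P.natDegree + s * 1 :=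
          natDegree_mul_le_of_le le_rfl (natDegree_pow_le_of_le s hFd)
      _ < L := by omega
  simpa [hFz, hFnorm] using norm_eval_le_sum_norm_eval_pow hζ hdeg hz.le

end Interpolation

section UnitCircle

theorem norm_fourierChar_add_fourierChar (u v : ℝ) :
    ‖(𝐞 u + 𝐞 v : ℂ)‖ = 2 * |cos (π * (v - u))| := by
  have hfactor : (𝐞 u + 𝐞 v : ℂ) = 𝐞 ((u + v) / 2) * (2 * cos (π * (v - u)) : ℝ) := by
    simp only [fourierChar_apply]
    push_cast
    rw [Complex.two_cos, mul_add, ← Complex.exp_add, ← Complex.exp_add, add_comm]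
    congr 2 <;> ring
  rw [hfactor, norm_mul, Circle.norm_coe, one_mul, Complex.norm_real, Real.norm_eq_abs, abs_mul,
    abs_two]

theorem cos_pi_mul_nonneg {u : ℝ} (hu : |u| ≤ 1 / 2) : 0 ≤ cos (π * u) := by
  obtain ⟨hlow, hup⟩ := abs_le.1 hu
  exact cos_nonneg_of_mem_Icc ⟨by nlinarith [pi_pos], by nlinarith [pi_pos]⟩

theorem cos_pi_mul_mem_Ioo {δ : ℝ} (hδ : δ ∈ Set.Ioo 0 (1 / 2)) : cos (π * δ) ∈ Set.Ioo 0 1 := by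
  obtain ⟨hδ0, hδ2⟩ := hδ
  refine ⟨cos_pos_of_mem_Ioo ⟨?_, ?_⟩, ?_⟩
  · nlinarith [pi_pos]
  · nlinarith [pi_pos]
  · rw [← cos_zero]
    exact cos_lt_cos_of_nonneg_of_le_pi le_rfl (by nlinarith [pi_pos]) (by positivity)

theorem abs_cos_pi_mul (u : ℝ) : |cos (π * u)| = cos (π * (u - round u)) := by
  rw [← abs_of_nonneg (cos_pi_mul_nonneg (abs_sub_round u)), mul_sub, mul_comm π (round u : ℝ),
    cos_sub_int_mul_pi, abs_mul, abs_neg_one_zpow, one_mul]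

theorem norm_fourierChar_add_fourierChar_le {δ u v : ℝ} (hδ : 0 ≤ δ)
    (huv : ∀ n : ℤ, δ < |v - u - n|) : ‖(𝐞 u + 𝐞 v : ℂ)‖ ≤ 2 * cos (π * δ) := by
  rw [norm_fourierChar_add_fourierChar, abs_cos_pi_mul, ← cos_abs, abs_mul, abs_of_pos pi_pos]
  have := cos_le_cos_of_nonneg_of_le_pi (mul_nonneg pi_pos.le hδ)
    (by nlinarith [pi_pos, abs_sub_round (v - u)])
    (mul_le_mul_of_nonneg_left (huv (round (v - u))).le pi_pos.le)
  gcongr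

theorem fourierChar_intCast (n : ℤ) : 𝐞 (n : ℝ) = 1 := by
  rw [fourierChar_apply', Circle.exp_two_pi_mul_int]

theorem isPrimitiveRoot_fourierChar_inv {L : ℕ} (hL : L ≠ 0) :
    IsPrimitiveRoot (𝐞 (L : ℝ)⁻¹ : ℂ) L := by
  convert Complex.isPrimitiveRoot_exp L hL using 1
  rw [fourierChar_apply]
  push_cast
  ring_nf

theorem norm_eval_fourierChar_le {P : ℂ[X]} {s L : ℕ} (hP : P.natDegree + s < L) {M : ℝ}
    (hM : ∀ z : ℂ, ‖z‖ = 1 → ‖P.eval z‖ ≤ M) {δ : ℝ} (hδ : δ ∈ Set.Icc 0 (1 / 2)) {t : ℝ}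
    (hroot : ∀ j : ℤ, |t - j / L| ≤ δ → P.eval (𝐞 (j / L) : ℂ) = 0) :
    ‖P.eval (𝐞 t : ℂ)‖ ≤ L * (M * cos (π * δ) ^ s) := by
  have hL : L ≠ 0 := by omega
  have hM0 : 0 ≤ M := (norm_nonneg _).trans (hM 1 norm_one)
  have hcos : 0 ≤ cos (π * δ) := cos_pi_mul_nonneg ((abs_of_nonneg hδ.1).trans_le hδ.2)
  have hpow (j : ℕ) : (𝐞 (L : ℝ)⁻¹ : ℂ) ^ j = 𝐞 (j / L : ℝ) := by
    rw [← Circle.coe_pow, ← AddChar.map_nsmul_eq_pow, nsmul_eq_mul, div_eq_mul_inv]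
  have hterm : ∀ j ∈ Finset.range L, ‖P.eval ((𝐞 (L : ℝ)⁻¹ : ℂ) ^ j)‖ *
      (‖(𝐞 t : ℂ) + (𝐞 (L : ℝ)⁻¹ : ℂ) ^ j‖ / 2) ^ s ≤ M * cos (π * δ) ^ s := fun j _ ↦ by
    rw [hpow]
    by_cases! hnear : ∃ n : ℤ, |(j / L : ℝ) - t - n| ≤ δ
    · obtain ⟨n, hn⟩ := hnear
      have hshift : (j - n * L : ℤ) / (L : ℝ) = j / L - n := by
        push_cast
        field_simp
      have hzero := hroot (j - n * L) (by rwa [hshift, abs_sub_comm, sub_right_comm])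
      rw [hshift, AddChar.map_sub_eq_div, fourierChar_intCast, div_one] at hzero
      rw [hzero, norm_zero, zero_mul]
      positivity
    · have := norm_fourierChar_add_fourierChar_le hδ.1 hnear
      gcongr
      · exact hM _ (Circle.norm_coe _)
      · linarith
  calc ‖P.eval (𝐞 t : ℂ)‖
      ≤ ∑ j ∈ Finset.range L, ‖P.eval ((𝐞 (L : ℝ)⁻¹ : ℂ) ^ j)‖ *
          (‖(𝐞 t : ℂ) + (𝐞 (L : ℝ)⁻¹ : ℂ) ^ j‖ / 2) ^ s :=
        norm_eval_le_sum_norm_eval_pow_mul (isPrimitiveRoot_fourierChar_inv hL) hP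
          (Circle.norm_coe _)
    _ ≤ ∑ _ ∈ Finset.range L, M * cos (π * δ) ^ s := Finset.sum_le_sum hterm
    _ = L * (M * cos (π * δ) ^ s) := by rw [Finset.sum_const, Finset.card_range, nsmul_eq_mul]

end UnitCircle

section Prolate

variable {N : ℕ}

theorem eval_ofFn {R : Type*} [CommSemiring R] [DecidableEq R] (x : Fin N → R) (r : R) :
    (ofFn N x).eval r = ∑ n, x n * r ^ (n : ℕ) := by
  simp [ofFn_eq_sum_monomial, eval_finsetSum]

theorem norm_eval_ofFn_sq_le (x : EuclideanSpace ℂ (Fin N)) {z : ℂ} (hz : ‖z‖ ≤ 1) :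
    ‖(ofFn N x.ofLp).eval z‖ ^ 2 ≤ N * ‖x‖ ^ 2 := by
  have hsum : ‖(ofFn N x.ofLp).eval z‖ ≤ ∑ n, ‖x n‖ := by
    rw [eval_ofFn]
    refine norm_sum_le_of_le _ fun n _ ↦ ?_
    rw [norm_mul, norm_pow]
    exact mul_le_of_le_one_right (norm_nonneg _) (pow_le_one₀ (norm_nonneg z) hz)
  calc ‖(ofFn N x.ofLp).eval z‖ ^ 2 ≤ (∑ n, ‖x n‖) ^ 2 := by gcongr
    _ ≤ N * ‖x‖ ^ 2 := by
      simpa [EuclideanSpace.norm_sq_eq] using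
        sq_sum_le_card_mul_sum_sq (s := Finset.univ) (f := fun n ↦ ‖x n‖)

variable {S : Set ℝ}

theorem prolate1D_apply (m n : Fin N) :
    prolate1D N S m n = ∫ f in S, star (𝐞 (-f) ^ (m : ℕ) : ℂ) * 𝐞 (-f) ^ (n : ℕ) := by
  refine integral_congr_ae (.of_forall fun f ↦ ?_)
  simp only [fourierChar_apply, Complex.star_def, ← Complex.exp_nat_mul, ← Complex.exp_conj,
    ← Complex.exp_add, map_mul, map_natCast, Complex.conj_ofReal, Complex.conj_I]
  push_cast
  ring_nf

theorem inner_toEuclideanLin_prolate1D (hS : volume S < ⊤) (x : EuclideanSpace ℂ (Fin N)) :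
    inner ℂ x (toEuclideanLin (prolate1D N S) x) =
      ∫ f in S, ((‖(ofFn N x.ofLp).eval (𝐞 (-f) : ℂ)‖ ^ 2 : ℝ) : ℂ) := by
  have hint (m n : Fin N) : IntegrableOn
      (fun f ↦ star (𝐞 (-f) ^ (m : ℕ) : ℂ) * 𝐞 (-f) ^ (n : ℕ)) S :=
    Measure.integrableOn_of_bounded hS.ne (by fun_prop) (M := 1)
      (.of_forall fun f ↦ by simp [Circle.norm_coe])
  have hsq (f : ℝ) : ((‖(ofFn N x.ofLp).eval (𝐞 (-f) : ℂ)‖ ^ 2 : ℝ) : ℂ) =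
      ∑ m, ∑ n, star (x m) * x n * (star (𝐞 (-f) ^ (m : ℕ) : ℂ) * 𝐞 (-f) ^ (n : ℕ)) := by
    push_cast
    rw [← Complex.conj_mul', eval_ofFn, map_sum, Finset.sum_mul_sum]
    simp only [map_mul, Complex.star_def, mul_mul_mul_comm]
  simp_rw [hsq]
  rw [integral_finsetSum _ fun m _ ↦ integrable_finsetSum _ fun n _ ↦ (hint m n).const_mul _]
  rw [EuclideanSpace.inner_eq_star_dotProduct, dotProduct_comm, dotProduct]
  refine Finset.sum_congr rfl fun m _ ↦ ?_
  rw [integral_finsetSum _ fun n _ ↦ (hint m n).const_mul _]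
  simp only [integral_const_mul, ← prolate1D_apply]
  simp [mulVec, dotProduct, Finset.mul_sum, toLpLin_apply, mul_assoc, mul_comm (x.ofLp _)]

theorem re_inner_toEuclideanLin_prolate1D_le {s : ℕ} (hS : volume S < ⊤) {δ : ℝ}
    (hδ : δ ∈ Set.Icc 0 (1 / 2)) {x : EuclideanSpace ℂ (Fin N)}
    (hx : ∀ t ∈ S, ∀ j : ℤ, |t - j / (N + s : ℕ)| ≤ δ →
      (ofFn N x.ofLp).eval (𝐞 (-(j / (N + s : ℕ))) : ℂ) = 0) :
    (inner ℂ x (toEuclideanLin (prolate1D N S) x)).re ≤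
      volume.real S * N * ((N + s : ℕ) * cos (π * δ) ^ s) ^ 2 * ‖x‖ ^ 2 := by
  rcases N.eq_zero_or_pos with rfl | hN
  · simp [Subsingleton.elim x 0]
  set ρ := cos (π * δ)
  have hdeg : (ofFn N x.ofLp).natDegree + s < N + s := by
    gcongr
    exact ofFn_natDegree_lt hN _
  have hsup (z : ℂ) (hz : ‖z‖ = 1) : ‖(ofFn N x.ofLp).eval z‖ ≤ √(N * ‖x‖ ^ 2) :=
    le_sqrt_of_sq_le (norm_eval_ofFn_sq_le x hz.le)
  have hpoint : ∀ t ∈ S, ‖‖(ofFn N x.ofLp).eval (𝐞 (-t) : ℂ)‖ ^ 2‖ ≤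
      N * ((N + s : ℕ) * ρ ^ s) ^ 2 * ‖x‖ ^ 2 := fun t ht ↦ by
    have hroot (j : ℤ) (hj : |-t - j / (N + s : ℕ)| ≤ δ) :
        (ofFn N x.ofLp).eval (𝐞 (j / (N + s : ℕ)) : ℂ) = 0 := by
      rw [← abs_neg, neg_sub, sub_neg_eq_add, add_comm] at hj
      simpa [neg_div] using hx t ht (-j) (by simpa [neg_div] using hj)
    calc ‖‖(ofFn N x.ofLp).eval (𝐞 (-t) : ℂ)‖ ^ 2‖
        = ‖(ofFn N x.ofLp).eval (𝐞 (-t) : ℂ)‖ ^ 2 := by rw [norm_pow, norm_norm]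
      _ ≤ ((N + s : ℕ) * (√(N * ‖x‖ ^ 2) * ρ ^ s)) ^ 2 := by
        gcongr
        exact norm_eval_fourierChar_le hdeg hsup hδ hroot
      _ = N * ((N + s : ℕ) * ρ ^ s) ^ 2 * ‖x‖ ^ 2 := by
        rw [mul_left_comm, mul_pow, sq_sqrt (by positivity)]
        ring
  rw [inner_toEuclideanLin_prolate1D hS, integral_complex_ofReal, Complex.ofReal_re]
  calc ∫ t in S, ‖(ofFn N x.ofLp).eval (𝐞 (-t) : ℂ)‖ ^ 2
      ≤ N * ((N + s : ℕ) * ρ ^ s) ^ 2 * ‖x‖ ^ 2 * volume.real S :=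
        (le_norm_self _).trans (norm_setIntegral_le_of_norm_le_const hS hpoint)
    _ = volume.real S * N * ((N + s : ℕ) * ρ ^ s) ^ 2 * ‖x‖ ^ 2 := by ring

theorem le_card_add_card_eigenvalues_prolate1D_le {s : ℕ} (hS : volume S < ⊤) {δ : ℝ}
    (hδ : δ ∈ Set.Icc 0 (1 / 2)) {T : Finset ℤ}
    (hT : ∀ t ∈ S, ∀ j : ℤ, |t - j / (N + s : ℕ)| ≤ δ → j ∈ T)
    (hA : (prolate1D N S).IsHermitian) :
    N ≤ #T + #{k | hA.eigenvalues k ≤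
      volume.real S * N * ((N + s : ℕ) * cos (π * δ) ^ s) ^ 2} := by
  let φ : EuclideanSpace ℂ (Fin N) →ₗ[ℂ] (T → ℂ) := LinearMap.pi fun j ↦
    leval (𝐞 (-(j / (N + s : ℕ))) : ℂ) ∘ₗ ofFn N ∘ₗ
      (WithLp.linearEquiv 2 ℂ (Fin N → ℂ)).toLinearMap
  have hcodim : N ≤ #T + finrank ℂ (LinearMap.ker φ) := by
    have hrange : finrank ℂ (LinearMap.range φ) ≤ #T := by
      simpa using (LinearMap.range φ).finrank_le
    have := φ.finrank_range_add_finrank_ker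
    rw [finrank_euclideanSpace_fin] at this
    omega
  refine hcodim.trans (Nat.add_le_add_left (finrank_le_card_eigenvalue_le hA.eigenvectorBasis
    (T := toEuclideanLin (prolate1D N S)) (fun k ↦ ?_) fun x hx ↦ ?_) _)
  · ext i
    simpa [toLpLin_apply] using congrFun (hA.mulVec_eigenvectorBasis k) i
  · refine re_inner_toEuclideanLin_prolate1D_le hS hδ fun t ht j hj ↦ ?_
    exact congrFun hx ⟨j, hT t ht j hj⟩

theorem eigenvalue_prolate1D_le_of_card_le {s : ℕ} (hS : volume S < ⊤) {δ : ℝ}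
    (hδ : δ ∈ Set.Icc 0 (1 / 2)) {T : Finset ℤ}
    (hT : ∀ t ∈ S, ∀ j : ℤ, |t - j / (N + s : ℕ)| ≤ δ → j ∈ T)
    (hA : (prolate1D N S).IsHermitian) {μ : Fin N → ℝ} (hμ : Antitone μ) {σ : Equiv.Perm (Fin N)}
    (hσ : hA.eigenvalues = μ ∘ σ) {l : Fin N} (hl : #T ≤ l) :
    μ l ≤ volume.real S * N * ((N + s : ℕ) * cos (π * δ) ^ s) ^ 2 := by
  have hcount := le_card_add_card_eigenvalues_prolate1D_le hS hδ hT hA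
  refine le_of_antitone_of_le_add_card hμ (hcount.trans (add_le_add hl (le_of_eq ?_)))
  rw [hσ]
  exact Finset.card_equiv σ (by simp)

end Prolate

section Grid

variable {ι : Type*} [Fintype ι] {f W : ι → ℝ} {δ : ℝ} {L : ℕ}

/-- The integers `j` for which the grid point `j / L` lies within `δ` of one of the bands
`[f i - W i, f i + W i]`. -/
noncomputable def nearbyGridIndices (f W : ι → ℝ) (δ : ℝ) (L : ℕ) : Finset ℤ :=
  Finset.univ.biUnion fun i ↦ Finset.Icc ⌈(f i - W i - δ) * L⌉ ⌊(f i + W i + δ) * L⌋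

theorem mem_nearbyGridIndices (hL : 0 < L) {t : ℝ} (ht : t ∈ ⋃ i, Set.Icc (f i - W i) (f i + W i))
    {j : ℤ} (hj : |t - j / L| ≤ δ) : j ∈ nearbyGridIndices f W δ L := by
  obtain ⟨i, hi⟩ := Set.mem_iUnion.1 ht
  have hL' : (0 : ℝ) < L := by exact_mod_cast hL
  rw [abs_le] at hj
  rw [nearbyGridIndices, Finset.mem_biUnion]
  refine ⟨i, Finset.mem_univ i, Finset.mem_Icc.2 ⟨Int.ceil_le.2 ?_, Int.le_floor.2 ?_⟩⟩
  · rw [← le_div_iff₀ hL']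
    linarith [hi.1]
  · rw [← div_le_iff₀ hL']
    linarith [hi.2]

theorem card_Icc_ceil_floor_le {a b : ℝ} (hab : a ≤ b) :
    (#(Finset.Icc ⌈a⌉ ⌊b⌋) : ℝ) ≤ b - a + 1 := by
  have hnonneg : 0 ≤ ⌊b⌋ + 1 - ⌈a⌉ := by
    have := Int.ceil_le_floor_add_one a
    have := Int.floor_le_floor hab
    omega
  rw [Int.card_Icc, ← Int.cast_natCast, Int.toNat_of_nonneg hnonneg]
  push_cast
  linarith [Int.floor_le b, Int.le_ceil a]

theorem card_nearbyGridIndices_le (hWδ : ∀ i, 0 ≤ W i + δ) :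
    #(nearbyGridIndices f W δ L) ≤ ∑ i, ⌈2 * (W i + δ) * L + 1⌉₊ := by
  refine Finset.card_biUnion_le.trans (Finset.sum_le_sum fun i _ ↦ ?_)
  have hle : (f i - W i - δ) * L ≤ (f i + W i + δ) * L := by
    gcongr
    linarith [hWδ i]
  have := (card_Icc_ceil_floor_le hle).trans_eq
    (by ring : _ = 2 * (W i + δ) * L + 1)
  exact_mod_cast this.trans (Nat.le_ceil _)

-- Half of the slack `ε` absorbs the factors `1 + θ`, the other half the `+ 1` of each band.
theorem card_nearbyGridIndices_le_sum_ceil (hW : ∀ i, 0 ≤ W i) (hδ : 0 ≤ δ) {θ ε : ℝ} (hθ : 0 ≤ θ)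
    (hδW : ∀ i, δ ≤ θ * W i) (hθε : (1 + θ) ^ 2 = 1 + ε / 2) {N : ℕ} (hL : L ≤ (1 + θ) * N)
    (hN : ∀ i, 1 ≤ N * (W i * ε)) :
    #(nearbyGridIndices f W δ L) ≤ ∑ i, ⌈2 * N * W i * (1 + ε)⌉₊ := by
  refine (card_nearbyGridIndices_le fun i ↦ add_nonneg (hW i) hδ).trans
    (Finset.sum_le_sum fun i _ ↦ Nat.ceil_mono ?_)
  have := hW i
  calc 2 * (W i + δ) * L + 1 ≤ 2 * (W i + θ * W i) * ((1 + θ) * N) + N * (W i * ε) := by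
        gcongr
        exacts [hδW i, hN i]
    _ = 2 * N * W i * (1 + θ) ^ 2 + N * (W i * ε) := by ring
    _ = 2 * N * W i * (1 + ε) := by rw [hθε]; ring

end Grid

theorem exists_pow_mul_pow_floor_le_exp {ρ θ : ℝ} (hρ : ρ ∈ Set.Ioo 0 1) (hθ : 0 < θ) (k : ℕ) :
    ∃ C c : ℝ, 0 < C ∧ 0 < c ∧ ∀ N : ℕ, (N : ℝ) ^ k * ρ ^ ⌊θ * N⌋₊ ≤ C * exp (-c * N) := by
  have hlog : 0 < -log ρ := neg_pos.2 (log_neg hρ.1 hρ.2)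
  obtain ⟨c, hc⟩ : ∃ c, 2 * c = -log ρ * θ := ⟨-log ρ * θ / 2, mul_div_cancel₀ _ two_ne_zero⟩
  have hc0 : 0 < c := by linarith [mul_pos hlog hθ]
  refine ⟨k.factorial / c ^ k * exp (-log ρ), c, by positivity, hc0, fun N ↦ ?_⟩
  have hpoly : (N : ℝ) ^ k ≤ k.factorial / c ^ k * exp (c * N) := by
    have := pow_div_factorial_le_exp (c * N) (by positivity) k
    rw [div_le_iff₀ (by positivity), mul_pow] at this
    rw [div_mul_eq_mul_div, le_div_iff₀ (by positivity)]
    linarith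
  have hgeom : ρ ^ ⌊θ * N⌋₊ ≤ exp (-log ρ - 2 * c * N) := by
    nth_rw 1 [← exp_log hρ.1]
    rw [← exp_nat_mul, exp_le_exp, hc]
    linarith [mul_le_mul_of_nonneg_left (Nat.sub_one_lt_floor (θ * N)).le hlog.le]
  calc (N : ℝ) ^ k * ρ ^ ⌊θ * N⌋₊
      ≤ k.factorial / c ^ k * exp (c * N) * exp (-log ρ - 2 * c * N) :=
        mul_le_mul hpoly hgeom (pow_nonneg hρ.1.le _) (by positivity)
    _ = k.factorial / c ^ k * exp (-log ρ) * exp (-c * N) := by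
        rw [mul_assoc, mul_assoc _ (exp (-log ρ)), ← exp_add, ← exp_add]
        ring_nf

theorem eigenvalue_prolate1D_le_of_sum_ceil_le {ι : Type*} [Fintype ι] {f W : ι → ℝ}
    (hW : ∀ i, 0 ≤ W i) {δ θ ε : ℝ} (hδ : δ ∈ Set.Icc 0 (1 / 2)) (hθ : 0 ≤ θ)
    (hδW : ∀ i, δ ≤ θ * W i) (hθε : (1 + θ) ^ 2 = 1 + ε / 2) {N : ℕ}
    (hN : ∀ i, 1 ≤ N * (W i * ε))
    (hA : (prolate1D N (⋃ i, Set.Icc (f i - W i) (f i + W i))).IsHermitian)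
    {μ : Fin N → ℝ} (hμ : Antitone μ) {σ : Equiv.Perm (Fin N)} (hσ : hA.eigenvalues = μ ∘ σ)
    {l : Fin N} (hl : ∑ i, ⌈2 * N * W i * (1 + ε)⌉₊ ≤ l) :
    μ l ≤ volume.real (⋃ i, Set.Icc (f i - W i) (f i + W i)) * (1 + θ) ^ 2 *
      (N ^ 3 * (cos (π * δ) ^ 2) ^ ⌊θ * N⌋₊) := by
  set S := ⋃ i, Set.Icc (f i - W i) (f i + W i)
  set s := ⌊θ * N⌋₊
  have hS : volume S < ⊤ := (isCompact_iUnion fun i ↦ isCompact_Icc).measure_lt_top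
  have hL : (N + s : ℕ) ≤ (1 + θ) * N := by
    rw [Nat.cast_add, one_add_mul]
    gcongr
    exact Nat.floor_le (by positivity)
  have hcard := card_nearbyGridIndices_le_sum_ceil (f := f) hW hδ.1 hθ hδW hθε hL hN
  have hρ : 0 ≤ cos (π * δ) := cos_pi_mul_nonneg ((abs_of_nonneg hδ.1).trans_le hδ.2)
  calc μ l ≤ volume.real S * N * ((N + s : ℕ) * cos (π * δ) ^ s) ^ 2 :=
        eigenvalue_prolate1D_le_of_card_le hS hδ
          (fun t ht j ↦ mem_nearbyGridIndices (Nat.add_pos_left l.pos s) ht) hA hμ hσ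
          (hcard.trans hl)
    _ ≤ volume.real S * N * ((1 + θ) * N * cos (π * δ) ^ s) ^ 2 := by gcongr
    _ = volume.real S * (1 + θ) ^ 2 * (N ^ 3 * (cos (π * δ) ^ 2) ^ s) := by ring

theorem multiband_eigenvalue_cluster_near_zero_general {ι : Type*} [Fintype ι] (f : ι → ℝ)
    {W : ι → ℝ} (hW : ∀ i, 0 < W i) {ε : ℝ} (hε : 0 < ε) :
    ∃ (C c : ℝ) (N₀ : ℕ), 0 < C ∧ 0 < c ∧ 1 ≤ N₀ ∧
      ∀ N : ℕ, N₀ ≤ N →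
        ∀ (hA : (prolate1D N (⋃ i, Set.Icc (f i - W i) (f i + W i))).IsHermitian)
          (μ : Fin N → ℝ),
          Antitone μ →
          (∃ σ : Equiv.Perm (Fin N), hA.eigenvalues = μ ∘ σ) →
          ∀ l : Fin N, (∑ i, ⌈2 * (N : ℝ) * W i * (1 + ε)⌉₊) ≤ (l : ℕ) →
            μ l ≤ C * exp (-c * N) := by
  obtain ⟨θ, hθ, hθε⟩ : ∃ θ, 0 < θ ∧ (1 + θ) ^ 2 = 1 + ε / 2 :=
    ⟨√(1 + ε / 2) - 1, sub_pos.2 (lt_sqrt zero_le_one |>.2 (by linarith)), by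
      rw [add_sub_cancel, sq_sqrt (by positivity)]⟩
  obtain ⟨δ, hδ, hδW⟩ : ∃ δ ∈ Set.Ioo (0 : ℝ) (1 / 2), ∀ i, δ ≤ θ * W i := by
    obtain ⟨δ, hδ0, hδ⟩ := Order.exists_between_finsets {0}
      (insert (1 / 2) (Finset.univ.image fun i ↦ θ * W i)) (by simp [hθ, hW])
    rw [Finset.forall_mem_insert] at hδ
    exact ⟨δ, ⟨hδ0 0 (Finset.mem_singleton_self 0), hδ.1⟩, fun i ↦
      (hδ.2 _ (Finset.mem_image_of_mem _ (Finset.mem_univ i))).le⟩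
  obtain ⟨hρ0, hρ1⟩ := cos_pi_mul_mem_Ioo hδ
  obtain ⟨C, c, hC, hc, hdecay⟩ := exists_pow_mul_pow_floor_le_exp
    ⟨pow_pos hρ0 2, pow_lt_one₀ hρ0.le hρ1 two_ne_zero⟩ hθ 3
  have hlarge : ∀ᶠ N : ℕ in Filter.atTop, ∀ i, 1 ≤ N * (W i * ε) := Filter.eventually_all.2 fun i ↦
    (tendsto_natCast_atTop_atTop.atTop_mul_const (mul_pos (hW i) hε)).eventually_ge_atTop 1
  obtain ⟨N₀, hN₀⟩ := Filter.eventually_atTop.1 hlarge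
  set V := volume.real (⋃ i, Set.Icc (f i - W i) (f i + W i))
  refine ⟨(V + 1) * (1 + θ) ^ 2 * C, c, max 1 N₀, by positivity, hc, le_max_left _ _,
    fun N hN hA μ hμ ⟨σ, hσ⟩ l hl ↦ ?_⟩
  calc μ l ≤ V * (1 + θ) ^ 2 * (N ^ 3 * (cos (π * δ) ^ 2) ^ ⌊θ * N⌋₊) :=
        eigenvalue_prolate1D_le_of_sum_ceil_le (fun i ↦ (hW i).le) (Set.Ioo_subset_Icc_self hδ)
          hθ.le hδW hθε (hN₀ N (le_of_max_le_right hN)) hA hμ hσ hl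
    _ ≤ (V + 1) * (1 + θ) ^ 2 * (C * exp (-c * N)) := by
        gcongr ?_ * _ * ?_
        · linarith
        · exact hdecay N
    _ = (V + 1) * (1 + θ) ^ 2 * C * exp (-c * N) := by ring

theorem multiband_eigenvalue_cluster_near_zero
    (J : ℕ) (hJ : 1 ≤ J) (f W : Fin J → ℝ)
    (hW : ∀ i, W i ∈ Set.Ioo (0 : ℝ) (1 / 2))
    (hsub : ∀ i, Set.Icc (f i - W i) (f i + W i) ⊆ Set.Icc (-(1 / 2) : ℝ) (1 / 2))
    (hdisj : ∀ i j, i ≠ j →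
      Disjoint (Set.Icc (f i - W i) (f i + W i)) (Set.Icc (f j - W j) (f j + W j)))
    (ε : ℝ) (hε : ε ∈ Set.Ioo (0 : ℝ) (1 / (∑ i, 2 * W i) - 1)) :
    ∃ (Chat₃ Chat₄ : ℝ) (Nhat₂ : ℕ), 0 < Chat₃ ∧ 0 < Chat₄ ∧ 1 ≤ Nhat₂ ∧
      ∀ (N : ℕ), Nhat₂ ≤ N →
        ∀ (hA : (prolate1D N (⋃ i, Set.Icc (f i - W i) (f i + W i))).IsHermitian)
          (μ : Fin N → ℝ),
          Antitone μ →
          (∃ σ : Equiv.Perm (Fin N), hA.eigenvalues = μ ∘ σ) →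
          ∀ l : Fin N, (∑ i, ⌈2 * (N : ℝ) * W i * (1 + ε)⌉₊) ≤ (l : ℕ) →
            μ l ≤ Chat₃ * Real.exp (-Chat₄ * (N : ℝ)) :=
  multiband_eigenvalue_cluster_near_zero_general f (fun i ↦ (hW i).1) hε.1
end
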